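/- Let r₀ > 0 and let φ be a nonconstant C² real-valued function on the unit circle, transported to the circle of radius r₀+ε for each ε > 0 by θ ↦ φ(cos θ, sin θ). For each ε > 0, let u_ε be the solution of the perfect conductivity problem on the annulus {x ∈ ℝ² : r₀ < |x| < r₀+ε}: u_ε is harmonic on the open annulus, C¹ up to the closed annulus, identically equal to some constant on the inner circle {|x| = r₀}, has vanishing total radial flux across the inner circle (∫_{{|x|=r₀}} ⟨∇u_ε(x), x/|x|⟩ dσ(x) = 0), and u_ε((r₀+ε)(cos θ, sin θ)) = φ(cos θ, sin θ) for all θ. Then there exist constants ε₀ > 0 and 0 < c₁ ≤ c₂, depending only on r₀ and φ, such that for every ε ∈ (0, ε₀): c₁/ε ≤ sup over the open annulus of |∇u_ε| ≤ c₂/ε. -/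

import Mathlib

open MeasureTheory Metric Set
open scoped InnerProductSpace

/-- The Laplacian of `f : ℝ^d → ℝ` at `x`, as the sum of the pure second
partial derivatives in the coordinate directions. -/
noncomputable def laplacian {d : ℕ} (f : EuclideanSpace ℝ (Fin d) → ℝ)
    (x : EuclideanSpace ℝ (Fin d)) : ℝ :=
  ∑ i : Fin d,
    iteratedFDeriv ℝ 2 f x ![EuclideanSpace.single i 1, EuclideanSpace.single i 1]

/-- `f` is harmonic on the open set `U ⊆ ℝ^d`: it is `C²` there and its
Laplacian vanishes on `U`. -/
def HarmonicOnSet {d : ℕ} (f : EuclideanSpace ℝ (Fin d) → ℝ)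
    (U : Set (EuclideanSpace ℝ (Fin d))) : Prop :=
  ContDiffOn ℝ 2 f U ∧ ∀ x ∈ U, laplacian f x = 0

/-- The point `(cos θ, sin θ)` on the unit circle in `ℝ²`. -/
noncomputable def dir (θ : ℝ) : EuclideanSpace ℝ (Fin 2) :=
  (EuclideanSpace.equiv (Fin 2) ℝ).symm ![Real.cos θ, Real.sin θ]

/-- The polar angle of `x ∈ ℝ²`. -/
noncomputable def ang (x : EuclideanSpace ℝ (Fin 2)) : ℝ :=
  Complex.arg ((x 0 : ℂ) + (x 1 : ℂ) * Complex.I)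

/-!
In log-polar coordinates `x = e^s (cos θ, sin θ)` a solution `u` on the annulus `r < ‖x‖ < R`
becomes a harmonic function `v` on the vertical strip `log r < s < log R`, of width
`L ≈ (R - r) / r`, which is periodic in `θ`, equal to a constant `c` on the left edge and to the
boundary data `f` on the right edge.

*Upper bound.* First and second differences of `v` in `θ` are again harmonic and periodic, so the
maximum principle carries bounds on `f_θ` and `f_θθ` into the strip: `|v_θ|, |v_θθ| ≤ M`.
Harmonicity turns the second bound into `|v_ss| ≤ M`, and the mean value theorem along horizontal
segments gives `|v_s| ≤ |f - c| / L + M L`. The constant `c` is controlled by the flux: if `f ≤ M`,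
then `u` lies below the affine function of `log ‖x‖` with boundary values `c` and `M`, so its radial
derivative on the inner circle is at most a positive multiple of `M - c`; vanishing flux forces
`c ≤ M`.

*Lower bound.* If `f` takes two different values, one of them is at distance at least half their
difference from `c`, and the mean value theorem along that ray produces a large radial derivative.
-/

open Complex Filter Function Topology
open InnerProductSpace (HarmonicAt HarmonicOnNhd HarmonicContOnCl)
open scoped Laplacian Real

section HarmonicFunctions

theorem laplacian_comp_linearIsometryEquiv {E F G : Type*} [NormedAddCommGroup E]
    [InnerProductSpace ℝ E] [FiniteDimensional ℝ E] [NormedAddCommGroup F] [InnerProductSpace ℝ F]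
    [FiniteDimensional ℝ F] [NormedAddCommGroup G] [NormedSpace ℝ G] (l : E ≃ₗᵢ[ℝ] F) (f : F → G) :
    Δ (f ∘ l) = Δ f ∘ l := by
  let b := stdOrthonormalBasis ℝ E
  ext x
  have hcomp : iteratedFDeriv ℝ 2 (f ∘ l) x =
      (iteratedFDeriv ℝ 2 f (l x)).compContinuousLinearMap
        fun _ => (l.toContinuousLinearEquiv : E →L[ℝ] F) := by
    simpa only [iteratedFDerivWithin_univ, preimage_univ] using!
      l.toContinuousLinearEquiv.iteratedFDerivWithin_comp_right f uniqueDiffOn_univ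
        (mem_univ (l x)) 2
  rw [Function.comp_apply, InnerProductSpace.laplacian_eq_iteratedFDeriv_orthonormalBasis _ b,
    InnerProductSpace.laplacian_eq_iteratedFDeriv_orthonormalBasis _ (b.map l)]
  refine Finset.sum_congr rfl fun i _ => ?_
  rw [hcomp, ContinuousMultilinearMap.compContinuousLinearMap_apply]
  congr 1
  ext j
  fin_cases j <;> rfl

theorem HarmonicOnSet.harmonicOnNhd {d : ℕ} {f : EuclideanSpace ℝ (Fin d) → ℝ}
    {U : Set (EuclideanSpace ℝ (Fin d))} (hf : HarmonicOnSet f U) (hU : IsOpen U) :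
    HarmonicOnNhd f U := fun x hx => by
  refine ⟨hf.1.contDiffAt (hU.mem_nhds hx), ?_⟩
  filter_upwards [hU.mem_nhds hx] with y hy
  simpa [InnerProductSpace.laplacian_eq_iteratedFDeriv_orthonormalBasis f
    (EuclideanSpace.basisFun (Fin d) ℝ), laplacian] using hf.2 y hy

theorem harmonicAt_comp_linearIsometryEquiv {E F G : Type*} [NormedAddCommGroup E]
    [InnerProductSpace ℝ E] [FiniteDimensional ℝ E] [NormedAddCommGroup F] [InnerProductSpace ℝ F]
    [FiniteDimensional ℝ F] [NormedAddCommGroup G] [NormedSpace ℝ G] (l : E ≃ₗᵢ[ℝ] F) {f : F → G}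
    {x : E} (hf : HarmonicAt f (l x)) : HarmonicAt (f ∘ l) x := by
  refine ⟨hf.1.comp x l.contDiff.contDiffAt, ?_⟩
  rw [laplacian_comp_linearIsometryEquiv]
  exact l.continuous.continuousAt.eventually hf.2

theorem exists_analyticAt_re_eventuallyEq {f : ℂ → ℝ} {z : ℂ} (hf : HarmonicAt f z) :
    ∃ F : ℂ → ℂ, AnalyticAt ℂ F z ∧ (fun w => (F w).re) =ᶠ[𝓝 z] f := by
  obtain ⟨ρ, hρ, hball⟩ := Metric.eventually_nhds_iff_ball.1 hf.eventually
  obtain ⟨F, hF, hre⟩ :=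
    InnerProductSpace.HarmonicOnNhd.exists_analyticOnNhd_ball_re_eq (f := f) hball
  exact ⟨F, hF z (mem_ball_self hρ), hre.eventuallyEq_of_mem (ball_mem_nhds z hρ)⟩

theorem harmonicAt_comp_analyticAt {f : ℂ → ℝ} {g : ℂ → ℂ} {z : ℂ} (hf : HarmonicAt f (g z))
    (hg : AnalyticAt ℂ g z) : HarmonicAt (f ∘ g) z := by
  obtain ⟨F, hF, hre⟩ := exists_analyticAt_re_eventuallyEq hf
  exact (InnerProductSpace.harmonicAt_congr_nhds (hre.comp_tendsto hg.continuousAt)).1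
    (hF.comp hg).harmonicAt_re

theorem harmonicContOnCl_comp_diffContOnCl {f : ℂ → ℝ} {g : ℂ → ℂ} {U V : Set ℂ}
    (hf : HarmonicContOnCl f U) (hg : DiffContOnCl ℂ g V) (hV : IsOpen V) (hVU : MapsTo g V U) :
    HarmonicContOnCl (f ∘ g) V where
  harmonicOnNhd _ hz := harmonicAt_comp_analyticAt (hf.harmonicOnNhd _ (hVU hz))
    (hg.differentiableOn.analyticAt (hV.mem_nhds hz))
  continuousOn := hf.continuousOn.comp hg.continuousOn
    (hVU.closure_of_continuousOn hg.continuousOn)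

theorem eventually_eq_of_isLocalMax_of_harmonicAt {f : ℂ → ℝ} {z : ℂ} (hf : HarmonicAt f z)
    (hmax : IsLocalMax f z) : ∀ᶠ w in 𝓝 z, f w = f z := by
  -- If `f = Re F`, then `‖exp F‖ = exp f`, so the maximum modulus principle applies to `exp F`.
  obtain ⟨F, hF, hre⟩ := exists_analyticAt_re_eventuallyEq hf
  have hnorm : (fun w => ‖exp (F w)‖) =ᶠ[𝓝 z] fun w => Real.exp (f w) :=
    hre.mono fun w hw => by simp only [norm_exp, ← hw]
  have hmax_exp : IsLocalMax (norm ∘ fun w => exp (F w)) z :=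
    (hmax.comp_mono Real.exp_monotone).congr hnorm.symm
  have hdiff : ∀ᶠ w in 𝓝 z, DifferentiableAt ℂ (fun w => exp (F w)) w :=
    hF.cexp.eventually_analyticAt.mono fun w hw => hw.differentiableAt
  filter_upwards [norm_eventually_eq_of_isLocalMax hdiff hmax_exp, hnorm] with w hw hw'
  exact Real.exp_injective (hw'.symm.trans (hw.trans hnorm.self_of_nhds))

theorem eqOn_of_isPreconnected_of_isMaxOn_of_harmonicOnNhd {f : ℂ → ℝ} {U : Set ℂ} {z : ℂ}
    (hf : HarmonicOnNhd f U) (hU : IsOpen U) (hUc : IsPreconnected U) (hz : z ∈ U)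
    (hmax : IsMaxOn f U z) : EqOn f (fun _ => f z) U :=
  AnalyticOnNhd.eqOn_of_preconnected_of_eventuallyEq (𝕜 := ℝ)
    (fun w hw => HarmonicAt.analyticAt (hf w hw)) analyticOnNhd_const hUc hz
    (eventually_eq_of_isLocalMax_of_harmonicAt (hf z hz) (hmax.isLocalMax (hU.mem_nhds hz)))

end HarmonicFunctions

section PeriodicStrip

variable {a b T : ℝ} {v : ℂ → ℝ}

theorem le_of_periodic_of_boundary_le (hT : 0 < T) (hv : HarmonicContOnCl v (re ⁻¹' Ioo a b))
    (hper : Periodic v (T * I)) {M : ℝ} (hM : ∀ z, z.re = a ∨ z.re = b → v z ≤ M) {z : ℂ}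
    (hz : z.re ∈ Icc a b) : v z ≤ M := by
  obtain rfl | hab := (hz.1.trans hz.2).eq_or_lt
  · exact hM z (.inl (le_antisymm hz.2 hz.1))
  have hclosure : closure (re ⁻¹' Ioo a b) = re ⁻¹' Icc a b := by
    rw [closure_preimage_re, closure_Ioo hab.ne]
  have hcont : ContinuousOn v (re ⁻¹' Icc a b) := hclosure ▸ hv.continuousOn
  obtain ⟨w, hw, hwmax⟩ := (isCompact_Icc.reProdIm isCompact_Icc).exists_isMaxOn
    (⟨⟨a, 0⟩, left_mem_Icc.2 hab.le, left_mem_Icc.2 hT.le⟩ : (Icc a b ×ℂ Icc 0 T).Nonempty)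
    (hcont.mono fun y hy => hy.1)
  have hmax : IsMaxOn v (re ⁻¹' Icc a b) w := fun y hy => by
    have hline : Periodic (fun t : ℝ => v ⟨y.re, t⟩) T := fun t => by
      convert hper ⟨y.re, t⟩ using 2
      apply Complex.ext <;> simp
    obtain ⟨t, ht, hyt⟩ := hline.exists_mem_Ico₀ hT y.im
    have hmem : (⟨y.re, t⟩ : ℂ) ∈ Icc a b ×ℂ Icc 0 T := ⟨hy, Ico_subset_Icc_self ht⟩
    exact hyt.trans_le (hwmax hmem)
  refine (hmax hz).trans ?_
  by_cases hwint : w.re ∈ Ioo a b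
  · have hopen : IsOpen (re ⁻¹' Ioo a b) := isOpen_Ioo.preimage continuous_re
    have hpre : IsPreconnected (re ⁻¹' Ioo a b) :=
      ((convex_Ioo a b).linear_preimage reLm).isPreconnected
    have hconst : EqOn v (fun _ => v w) (re ⁻¹' Icc a b) :=
      (eqOn_of_isPreconnected_of_isMaxOn_of_harmonicOnNhd hv.harmonicOnNhd hopen hpre hwint
        (hmax.on_subset (preimage_mono Ioo_subset_Icc_self))).of_subset_closure hcont
        continuousOn_const (preimage_mono Ioo_subset_Icc_self) hclosure.ge
    exact (hconst (show ((a : ℂ)).re ∈ Icc a b from left_mem_Icc.2 hab.le)).symm.trans_le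
      (hM a (.inl rfl))
  · exact hM w ((eq_endpoints_or_mem_Ioo_of_mem_Icc hw.1).imp_right (·.resolve_right hwint))

theorem abs_le_of_periodic_of_boundary_abs_le (hT : 0 < T)
    (hv : HarmonicContOnCl v (re ⁻¹' Ioo a b)) (hper : Periodic v (T * I)) {M : ℝ}
    (hM : ∀ z, z.re = a ∨ z.re = b → |v z| ≤ M) {z : ℂ} (hz : z.re ∈ Icc a b) : |v z| ≤ M :=
  abs_le'.2 ⟨le_of_periodic_of_boundary_le hT hv hper (fun w hw => (abs_le'.1 (hM w hw)).1) hz,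
    le_of_periodic_of_boundary_le hT hv.neg (fun w => congrArg Neg.neg (hper w))
      (fun w hw => (abs_le'.1 (hM w hw)).2) hz⟩

theorem le_affine_of_periodic_of_boundary_le (hab : a < b) (hT : 0 < T)
    (hv : HarmonicContOnCl v (re ⁻¹' Ioo a b)) (hper : Periodic v (T * I)) {A B : ℝ}
    (hA : ∀ z, z.re = a → v z ≤ A) (hB : ∀ z, z.re = b → v z ≤ B) {z : ℂ}
    (hz : z.re ∈ Icc a b) : v z ≤ A + (B - A) / (b - a) * (z.re - a) := by
  have hre : HarmonicContOnCl re (re ⁻¹' Ioo a b) :=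
    ⟨fun w _ => analyticAt_id.harmonicAt_re, continuous_re.continuousOn⟩
  have hdiff : HarmonicContOnCl (v - ((B - A) / (b - a)) • re) (re ⁻¹' Ioo a b) :=
    hv.sub (hre.const_smul _)
  have hperiodic : Periodic (v - ((B - A) / (b - a)) • re) (T * I) := fun w => by
    simp [hper w]
  have hle := le_of_periodic_of_boundary_le hT hdiff hperiodic
    (M := A - (B - A) / (b - a) * a) (fun w hw => ?_) hz
  · simp only [Pi.sub_apply, Pi.smul_apply, smul_eq_mul] at hle
    linarith
  simp only [Pi.sub_apply, Pi.smul_apply, smul_eq_mul]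
  obtain hw | hw := hw
  · rw [hw]
    exact sub_le_sub_right (hA w hw) _
  · have hslope : (B - A) / (b - a) * (b - a) = B - A := div_mul_cancel₀ _ (sub_pos.2 hab).ne'
    rw [hw]
    linarith [hB w hw]

end PeriodicStrip

section RealFunctions

theorem half_abs_sub_le_abs_sub_or (a b c : ℝ) :
    |a - b| / 2 ≤ |a - c| ∨ |a - b| / 2 ≤ |b - c| := by
  by_contra! hlt
  linarith [abs_sub_le a c b, abs_sub_comm c b, hlt.1, hlt.2]

theorem div_le_log_sub_log {r R : ℝ} (hr : 0 < r) (hR : 0 < R) :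
    (R - r) / R ≤ Real.log R - Real.log r := by
  rw [← Real.log_div hR.ne' hr.ne', ← one_sub_div hR.ne', ← inv_div]
  exact Real.one_sub_inv_le_log_of_pos (div_pos hR hr)

theorem log_sub_log_le_div {r R : ℝ} (hr : 0 < r) (hR : 0 < R) :
    Real.log R - Real.log r ≤ (R - r) / r := by
  rw [← neg_le_neg_iff, neg_sub, ← neg_div, neg_sub]
  exact div_le_log_sub_log hR hr

theorem hasDerivWithinAt_nonpos_of_isMaxOn_Icc_left {g : ℝ → ℝ} {g' a b : ℝ} (hab : a < b)
    (hmax : IsMaxOn g (Icc a b) a) (hg : HasDerivWithinAt g g' (Icc a b) a) : g' ≤ 0 := by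
  have hcone : b - a ∈ posTangentConeAt (Icc a b) a :=
    sub_mem_posTangentConeAt_of_segment_subset (segment_eq_Icc hab.le).subset
  have hle : (b - a) * g' ≤ 0 := hmax.localize.hasFDerivWithinAt_nonpos hg.hasFDerivWithinAt hcone
  exact nonpos_of_mul_nonpos_right hle (sub_pos.2 hab)

theorem abs_deriv_le_slope_add {a b K : ℝ} {g g' g'' : ℝ → ℝ} (hg : ContinuousOn g (Icc a b))
    (hg' : ∀ s ∈ Ioo a b, HasDerivAt g (g' s) s) (hg'' : ∀ s ∈ Ioo a b, HasDerivAt g' (g'' s) s)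
    (hK : ∀ s ∈ Ioo a b, |g'' s| ≤ K) {s : ℝ} (hs : s ∈ Ioo a b) :
    |g' s| ≤ |g b - g a| / (b - a) + K * (b - a) := by
  have hab : a < b := hs.1.trans hs.2
  obtain ⟨p, hp, hslope⟩ := exists_hasDerivAt_eq_slope g g' hab hg hg'
  have hK₀ : 0 ≤ K := (abs_nonneg _).trans (hK s hs)
  have hps : |g' s - g' p| ≤ K * |s - p| :=
    (convex_Ioo a b).norm_image_sub_le_of_norm_hasDerivWithin_le
      (fun t ht => (hg'' t ht).hasDerivWithinAt) hK hp hs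
  calc |g' s| = |g' p + (g' s - g' p)| := by rw [add_sub_cancel]
    _ ≤ |g' p| + |g' s - g' p| := abs_add_le _ _
    _ ≤ |g b - g a| / (b - a) + K * (b - a) := by
      refine add_le_add (by rw [hslope, abs_div, abs_of_pos (sub_pos.2 hab)])
        (hps.trans (mul_le_mul_of_nonneg_left ?_ hK₀))
      exact abs_le.2 ⟨by linarith [hs.1, hp.2], by linarith [hs.2, hp.1]⟩

theorem abs_sub_le_of_abs_deriv_le {f : ℝ → ℝ} {M : ℝ} (hf : Differentiable ℝ f)
    (hM : ∀ x, |deriv f x| ≤ M) (x t : ℝ) : |f (x + t) - f x| ≤ M * |t| := by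
  simpa using convex_univ.norm_image_sub_le_of_norm_deriv_le (fun y _ => hf y) (fun y _ => hM y)
    (mem_univ x) (mem_univ (x + t))

theorem abs_second_difference_le {f : ℝ → ℝ} {K : ℝ} (hf : Differentiable ℝ f)
    (hf' : Differentiable ℝ (deriv f)) (hK : ∀ x, |deriv (deriv f) x| ≤ K) (x s t : ℝ) :
    |(f (x + s + t) - f (x + s)) - (f (x + t) - f x)| ≤ K * |t| * |s| := by
  refine abs_sub_le_of_abs_deriv_le (f := fun y => f (y + t) - f y) (by fun_prop) (fun y => ?_) x s
  rw [deriv_fun_sub (by fun_prop) (by fun_prop), deriv_comp_add_const]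
  exact abs_sub_le_of_abs_deriv_le hf' hK y t

theorem periodic_deriv {f : ℝ → ℝ} {T : ℝ} (hf : Periodic f T) : Periodic (deriv f) T := fun x => by
  rw [← deriv_comp_add_const, hf.funext]

theorem exists_abs_le_of_periodic {f : ℝ → ℝ} {T : ℝ} (hT : T ≠ 0) (hper : Periodic f T)
    (hf : Continuous f) : ∃ M, ∀ x, |f x| ≤ M := by
  obtain ⟨M, hM⟩ := (hper.isBounded_of_continuous hT hf).exists_norm_le
  exact ⟨M, fun x => hM _ (mem_range_self x)⟩

theorem exists_abs_le_deriv_deriv_of_periodic {f : ℝ → ℝ} {T : ℝ} (hT : T ≠ 0)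
    (hper : Periodic f T) (hf : ContDiff ℝ 2 f) :
    ∃ M, (∀ x, |f x| ≤ M) ∧ (∀ x, |deriv f x| ≤ M) ∧ ∀ x, |deriv (deriv f) x| ≤ M := by
  have hf₁ : ContDiff ℝ 1 (deriv f) := hf.deriv'
  obtain ⟨M₀, hM₀⟩ := exists_abs_le_of_periodic hT hper hf.continuous
  obtain ⟨M₁, hM₁⟩ := exists_abs_le_of_periodic hT (periodic_deriv hper) hf₁.continuous
  obtain ⟨M₂, hM₂⟩ := exists_abs_le_of_periodic hT (periodic_deriv (periodic_deriv hper))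
    (hf₁.continuous_deriv le_rfl)
  exact ⟨max M₀ (max M₁ M₂), fun x => (hM₀ x).trans (by simp), fun x => (hM₁ x).trans (by simp),
    fun x => (hM₂ x).trans (by simp)⟩

end RealFunctions

section FrechetDerivative

theorem norm_fderiv_apply_le_of_norm_sub_le {E F : Type*} [NormedAddCommGroup E] [NormedSpace ℝ E]
    [NormedAddCommGroup F] [NormedSpace ℝ F] {f : E → F} {x y : E} {C : ℝ}
    (hf : DifferentiableAt ℝ f x) (hC : ∀ t : ℝ, ‖f (x + t • y) - f x‖ ≤ C * |t|) :
    ‖fderiv ℝ f x y‖ ≤ C := by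
  have hC₀ : 0 ≤ C := by simpa using (norm_nonneg _).trans (hC 1)
  have hline : HasDerivAt (fun t : ℝ => f (x + t • y)) (fderiv ℝ f x y) 0 :=
    hf.hasFDerivAt.hasLineDerivAt y
  simpa using hline.hasFDerivAt.le_of_lip' hC₀
    (Eventually.of_forall fun t => by simpa using hC t)

theorem hasDerivWithinAt_comp_ray {E F : Type*} [NormedAddCommGroup E] [NormedSpace ℝ E]
    [NormedAddCommGroup F] [NormedSpace ℝ F] {f : E → F} {s : Set E} {x : E} {t : Set ℝ}
    (hf : DifferentiableWithinAt ℝ f s x) (hmaps : MapsTo (fun a : ℝ => a • x) t s) :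
    HasDerivWithinAt (fun a : ℝ => f (a • x)) (fderivWithin ℝ f s x x) t 1 := by
  have hray : HasDerivWithinAt (fun a : ℝ => a • x) x t 1 := by
    simpa using ((hasDerivAt_id (1 : ℝ)).smul_const x).hasDerivWithinAt
  exact hf.hasFDerivWithinAt.comp_hasDerivWithinAt_of_eq 1 hray hmaps (one_smul ℝ x).symm

theorem norm_gradient {F : Type*} [NormedAddCommGroup F] [InnerProductSpace ℝ F] [CompleteSpace F]
    (u : F → ℝ) (x : F) : ‖gradient u x‖ = ‖fderiv ℝ u x‖ :=
  LinearIsometryEquiv.norm_map _ _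

theorem norm_complex_clm_le {F : Type*} [NormedAddCommGroup F] [NormedSpace ℝ F] (L : ℂ →L[ℝ] F) :
    ‖L‖ ≤ ‖L 1‖ + ‖L I‖ := by
  refine L.opNorm_le_bound (by positivity) fun z => ?_
  have hz : L z = z.re • L 1 + z.im • L I := by
    rw [← map_smul, ← map_smul, ← map_add]
    congr 1
    apply Complex.ext <;> simp
  calc ‖L z‖ ≤ |z.re| * ‖L 1‖ + |z.im| * ‖L I‖ := by
        simpa only [hz, norm_smul, Real.norm_eq_abs] using norm_add_le (z.re • L 1) (z.im • L I)
    _ ≤ (‖L 1‖ + ‖L I‖) * ‖z‖ := by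
        rw [add_mul, mul_comm ‖L 1‖, mul_comm ‖L I‖]
        gcongr
        exacts [abs_re_le_norm z, abs_im_le_norm z]

theorem differentiableAt_fderiv_apply {E F : Type*} [NormedAddCommGroup E] [NormedSpace ℝ E]
    [NormedAddCommGroup F] [NormedSpace ℝ F] {f : E → F} {x : E} (hf : ContDiffAt ℝ 2 f x) (y : E) :
    DifferentiableAt ℝ (fun w => fderiv ℝ f w y) x :=
  ((hf.fderiv_right (m := 1) (by norm_num)).differentiableAt one_ne_zero).clm_apply
    (differentiableAt_const y)

theorem fderiv_fderiv_one_add_fderiv_fderiv_I {v : ℂ → ℝ} {z : ℂ} (hv : HarmonicAt v z) :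
    fderiv ℝ (fun w => fderiv ℝ v w 1) z 1 + fderiv ℝ (fun w => fderiv ℝ v w I) z I = 0 := by
  have hd : DifferentiableAt ℝ (fderiv ℝ v) z :=
    (hv.1.fderiv_right (m := 1) (by norm_num)).differentiableAt one_ne_zero
  have hΔ := hv.2.self_of_nhds
  simp only [InnerProductSpace.laplacian_eq_iteratedFDeriv_complexPlane, iteratedFDeriv_two_apply,
    Matrix.cons_val_zero, Matrix.cons_val_one, Pi.zero_apply] at hΔ
  simpa [fderiv_clm_apply hd (differentiableAt_const _)] using hΔ

end FrechetDerivative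

section StripGradient

variable {a b T : ℝ} {v : ℂ → ℝ}

theorem harmonicContOnCl_sub_vertical_translate (hv : HarmonicContOnCl v (re ⁻¹' Ioo a b))
    (t : ℝ) : HarmonicContOnCl (fun z => v (z + t * I) - v z) (re ⁻¹' Ioo a b) :=
  (harmonicContOnCl_comp_diffContOnCl hv (g := (· + t * I))
    (Differentiable.diffContOnCl (by fun_prop)) (isOpen_Ioo.preimage continuous_re)
    fun z hz => by simpa using hz).sub hv

theorem abs_fderiv_apply_I_le (hT : 0 < T) (hv : HarmonicContOnCl v (re ⁻¹' Ioo a b))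
    (hper : Periodic v (T * I)) {M : ℝ}
    (hM : ∀ z, z.re = a ∨ z.re = b → ∀ t : ℝ, |v (z + t * I) - v z| ≤ M * |t|) {z : ℂ}
    (hz : z.re ∈ Ioo a b) : |fderiv ℝ v z I| ≤ M := by
  refine norm_fderiv_apply_le_of_norm_sub_le
    (hv.differentiableAt hz) fun t => ?_
  exact abs_le_of_periodic_of_boundary_abs_le hT (harmonicContOnCl_sub_vertical_translate hv t)
    ((hper.add_const (t * I)).sub hper) (fun w hw => hM w hw t) (Ioo_subset_Icc_self hz)

theorem abs_fderiv_fderiv_apply_I_I_le (hT : 0 < T) (hv : HarmonicContOnCl v (re ⁻¹' Ioo a b))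
    (hper : Periodic v (T * I)) {K : ℝ}
    (hK : ∀ z, z.re = a ∨ z.re = b → ∀ s t : ℝ,
      |(v (z + s * I + t * I) - v (z + s * I)) - (v (z + t * I) - v z)| ≤ K * |t| * |s|)
    {z : ℂ} (hz : z.re ∈ Ioo a b) : |fderiv ℝ (fun w => fderiv ℝ v w I) z I| ≤ K := by
  refine norm_fderiv_apply_le_of_norm_sub_le
    (differentiableAt_fderiv_apply (hv.contDiffAt hz) I) fun t => ?_
  have hzt : (z + t * I).re ∈ Ioo a b := by simpa using hz
  have hfderiv : fderiv ℝ (fun w => v (w + t * I) - v w) z I =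
      fderiv ℝ v (z + t * I) I - fderiv ℝ v z I := by
    rw [fderiv_fun_sub ((differentiableAt_comp_add_right _).2 (hv.differentiableAt hzt))
      (hv.differentiableAt hz), fderiv_comp_add_right]
    rfl
  rw [real_smul, ← hfderiv]
  exact abs_fderiv_apply_I_le hT (harmonicContOnCl_sub_vertical_translate hv t)
    ((hper.add_const (t * I)).sub hper) (fun w hw s => hK w hw s t) hz

theorem abs_fderiv_apply_one_le (hv : HarmonicContOnCl v (re ⁻¹' Ioo a b)) {A K : ℝ}
    (hA : ∀ t : ℝ, |v ⟨b, t⟩ - v ⟨a, t⟩| ≤ A)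
    (hK : ∀ z : ℂ, z.re ∈ Ioo a b → |fderiv ℝ (fun w => fderiv ℝ v w I) z I| ≤ K) {z : ℂ}
    (hz : z.re ∈ Ioo a b) : |fderiv ℝ v z 1| ≤ A / (b - a) + K * (b - a) := by
  have hab : a < b := hz.1.trans hz.2
  have hline : ∀ s : ℝ, HasDerivAt (fun s : ℝ => (⟨s, z.im⟩ : ℂ)) 1 s := fun s => by
    simpa [mk_eq_add_mul_I] using (ofRealCLM.hasDerivAt (x := s)).add_const (z.im * I)
  have hcont : ContinuousOn (fun s : ℝ => v ⟨s, z.im⟩) (Icc a b) := by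
    refine hv.continuousOn.comp
      (fun s _ => (hline s).continuousAt.continuousWithinAt) fun s hs => ?_
    rwa [closure_preimage_re, closure_Ioo hab.ne]
  refine (abs_deriv_le_slope_add hcont
    (g' := fun s => fderiv ℝ v ⟨s, z.im⟩ 1)
    (g'' := fun s => fderiv ℝ (fun w => fderiv ℝ v w 1) ⟨s, z.im⟩ 1) (K := K)
    (fun s hs => ?_) (fun s hs => ?_) (fun s hs => ?_) hz).trans ?_
  · exact (hv.differentiableAt hs).hasFDerivAt.comp_hasDerivAt s (hline s)
  · exact (differentiableAt_fderiv_apply (hv.contDiffAt hs) 1).hasFDerivAt.comp_hasDerivAt s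
      (hline s)
  · rw [eq_neg_of_add_eq_zero_left
      (fderiv_fderiv_one_add_fderiv_fderiv_I (hv.harmonicOnNhd ⟨s, z.im⟩ hs)), abs_neg]
    exact hK ⟨s, z.im⟩ hs
  · have := sub_nonneg.2 hab.le
    gcongr
    exact hA z.im

theorem norm_fderiv_le_of_boundary (hT : 0 < T) (hv : HarmonicContOnCl v (re ⁻¹' Ioo a b))
    (hper : Periodic v (T * I)) {c A M K : ℝ} {f : ℝ → ℝ} (ha : ∀ z, z.re = a → v z = c)
    (hb : ∀ z, z.re = b → v z = f z.im) (hf : ContDiff ℝ 2 f) (hA : ∀ t, |f t - c| ≤ A)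
    (hM : ∀ t, |deriv f t| ≤ M) (hK : ∀ t, |deriv (deriv f) t| ≤ K) {z : ℂ}
    (hz : z.re ∈ Ioo a b) : ‖fderiv ℝ v z‖ ≤ A / (b - a) + K * (b - a) + M := by
  have hM₀ : 0 ≤ M := (abs_nonneg _).trans (hM 0)
  have hK₀ : 0 ≤ K := (abs_nonneg _).trans (hK 0)
  have hf₁ : Differentiable ℝ f := hf.differentiable two_ne_zero
  have hf₂ : Differentiable ℝ (deriv f) := hf.differentiable_deriv_two
  refine (norm_complex_clm_le _).trans (add_le_add ?_ ?_)
  · refine abs_fderiv_apply_one_le hv (fun t => ?_) (fun w hw => ?_) hz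
    · rw [ha ⟨a, t⟩ rfl, hb ⟨b, t⟩ rfl]
      exact hA t
    · refine abs_fderiv_fderiv_apply_I_I_le hT hv hper (fun y hy s t => ?_) hw
      obtain hy | hy := hy
      · suffices 0 ≤ K * |t| * |s| by simpa [ha, hy]
        positivity
      · simpa [hb, hy] using abs_second_difference_le hf₁ hf₂ hK y.im s t
  · refine abs_fderiv_apply_I_le hT hv hper (fun y hy t => ?_) hz
    obtain hy | hy := hy
    · suffices 0 ≤ M * |t| by simpa [ha, hy]
      positivity
    · simpa [hb, hy] using abs_sub_le_of_abs_deriv_le hf₁ hM y.im t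

end StripGradient

section Annulus

/-- The open annulus `r < ‖x‖ < R` centred at the origin. -/
abbrev openAnnulus {E : Type*} [Norm E] (r R : ℝ) : Set E := {x | r < ‖x‖ ∧ ‖x‖ < R}

/-- The closed annulus `r ≤ ‖x‖ ≤ R` centred at the origin. -/
abbrev closedAnnulus {E : Type*} [Norm E] (r R : ℝ) : Set E := {x | r ≤ ‖x‖ ∧ ‖x‖ ≤ R}

variable {E : Type*} [NormedAddCommGroup E] {r R : ℝ}

theorem isOpen_openAnnulus : IsOpen (openAnnulus r R : Set E) :=
  (isOpen_lt continuous_const continuous_norm).inter (isOpen_lt continuous_norm continuous_const)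

theorem uniqueDiffOn_closedAnnulus [NormedSpace ℝ E] (hr : 0 < r) (hrR : r < R) :
    UniqueDiffOn ℝ (closedAnnulus r R : Set E) := fun x hx => by
  have hR : 0 < R := hr.trans hrR
  have hx₀ : 0 < ‖x‖ := hr.trans_le hx.1
  -- A ball touching both boundary spheres on the ray of `x` gives a convex subset containing `x`.
  let y : E := ((r + R) / 2 * ‖x‖⁻¹) • x
  have hy : ‖y‖ = (r + R) / 2 := by
    rw [norm_smul, Real.norm_of_nonneg (by positivity), inv_mul_cancel_right₀ hx₀.ne']
  have hxy : ‖x - y‖ = |‖x‖ - (r + R) / 2| := by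
    have hsub : x - y = ((‖x‖ - (r + R) / 2) * ‖x‖⁻¹) • x := by
      rw [sub_mul, mul_inv_cancel₀ hx₀.ne', sub_smul, one_smul]
    rw [hsub, norm_smul, norm_mul, norm_inv, norm_norm, inv_mul_cancel_right₀ hx₀.ne',
      Real.norm_eq_abs]
  have hsubset : closedBall y ((R - r) / 2) ⊆ closedAnnulus r R := fun w hw => by
    have hdist := abs_le.1 ((abs_norm_sub_norm_le w y).trans (mem_closedBall_iff_norm.1 hw))
    rw [hy] at hdist
    constructor <;> linarith
  have hxmem : x ∈ closedBall y ((R - r) / 2) := by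
    rw [mem_closedBall_iff_norm, hxy, abs_le]
    constructor <;> linarith [hx.1, hx.2]
  refine (uniqueDiffWithinAt_convex (convex_closedBall y _) ⟨y, ?_⟩
    (subset_closure hxmem)).mono hsubset
  exact ball_subset_interior_closedBall (mem_ball_self (by linarith))

end Annulus

section LogPolar

/-- The standard identification of `ℂ` with the Euclidean plane, `x + iy ↦ (x, y)`. -/
noncomputable def planeIso : ℂ ≃ₗᵢ[ℝ] EuclideanSpace ℝ (Fin 2) := orthonormalBasisOneI.repr

/-- Log-polar coordinates on the punctured plane, `s + iθ ↦ e^s (cos θ, sin θ)`: a conformal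
covering of annuli by vertical strips. -/
noncomputable def logPolar (z : ℂ) : EuclideanSpace ℝ (Fin 2) := planeIso (exp z)

theorem logPolar_eq_smul_dir (z : ℂ) : logPolar z = Real.exp z.re • dir z.im := by
  ext i
  fin_cases i
  · exact exp_re z
  · exact exp_im z

theorem norm_logPolar (z : ℂ) : ‖logPolar z‖ = Real.exp z.re := by
  rw [logPolar, LinearIsometryEquiv.norm_map, norm_exp]

theorem norm_dir (θ : ℝ) : ‖dir θ‖ = 1 := by
  simpa [logPolar_eq_smul_dir] using norm_logPolar (θ * I)

theorem dir_periodic : Periodic dir (2 * π) := fun θ => by simp [dir]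

theorem logPolar_periodic : Periodic logPolar ((2 * π : ℝ) * I) := fun z => by
  simpa [logPolar] using congrArg planeIso (exp_periodic z)

theorem continuous_logPolar : Continuous logPolar := planeIso.continuous.comp continuous_exp

theorem exists_logPolar_eq {x : EuclideanSpace ℝ (Fin 2)} (hx : x ≠ 0) : ∃ z, logPolar z = x :=
  ⟨log (planeIso.symm x), by rw [logPolar, exp_log (by simpa using hx), planeIso.apply_symm_apply]⟩

variable {r R : ℝ}

theorem logPolar_mem_openAnnulus_iff (hr : 0 < r) (hR : 0 < R) {z : ℂ} :
    logPolar z ∈ (openAnnulus r R : Set _) ↔ z.re ∈ Ioo (Real.log r) (Real.log R) := by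
  rw [mem_ofPred_eq, norm_logPolar, mem_Ioo, Real.log_lt_iff_lt_exp hr, Real.lt_log_iff_exp_lt hR]

theorem logPolar_mem_closedAnnulus_iff (hr : 0 < r) (hR : 0 < R) {z : ℂ} :
    logPolar z ∈ (closedAnnulus r R : Set _) ↔ z.re ∈ Icc (Real.log r) (Real.log R) := by
  rw [mem_ofPred_eq, norm_logPolar, mem_Icc, Real.log_le_iff_le_exp hr, Real.le_log_iff_exp_le hR]

theorem hasFDerivAt_logPolar (z : ℂ) : HasFDerivAt logPolar
    ((planeIso : ℂ →L[ℝ] EuclideanSpace ℝ (Fin 2)) ∘L ContinuousLinearMap.mul ℝ ℂ (exp z)) z := by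
  have hexp : HasFDerivAt exp (ContinuousLinearMap.mul ℝ ℂ (exp z)) z :=
    ((hasDerivAt_exp z).hasFDerivAt.restrictScalars ℝ).congr_fderiv (by ext; simp [mul_comm])
  exact (planeIso : ℂ →L[ℝ] EuclideanSpace ℝ (Fin 2)).hasFDerivAt.comp z hexp

theorem norm_logPolar_mul_norm_fderiv_le {F : Type*} [NormedAddCommGroup F] [NormedSpace ℝ F]
    {u : EuclideanSpace ℝ (Fin 2) → F} {z : ℂ} (hu : DifferentiableAt ℝ u (logPolar z)) :
    ‖logPolar z‖ * ‖fderiv ℝ u (logPolar z)‖ ≤ ‖fderiv ℝ (u ∘ logPolar) z‖ := by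
  have hx : 0 < ‖logPolar z‖ := by simpa [norm_logPolar] using Real.exp_pos _
  rw [mul_comm, ← le_div_iff₀ hx]
  refine ContinuousLinearMap.opNorm_le_bound _ (by positivity) fun y => ?_
  have hy : fderiv ℝ u (logPolar z) y =
      fderiv ℝ (u ∘ logPolar) z (planeIso.symm y / exp z) := by
    rw [(hu.hasFDerivAt.comp z (hasFDerivAt_logPolar z)).fderiv]
    simp [mul_div_cancel₀]
  calc ‖fderiv ℝ u (logPolar z) y‖
      ≤ ‖fderiv ℝ (u ∘ logPolar) z‖ * ‖planeIso.symm y / exp z‖ :=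
        hy ▸ ContinuousLinearMap.le_opNorm _ _
    _ = ‖fderiv ℝ (u ∘ logPolar) z‖ / ‖logPolar z‖ * ‖y‖ := by
      rw [norm_div, LinearIsometryEquiv.norm_map, logPolar, LinearIsometryEquiv.norm_map]
      ring

theorem harmonicContOnCl_comp_logPolar {u : EuclideanSpace ℝ (Fin 2) → ℝ} (hr : 0 < r)
    (hrR : r < R) (hu : HarmonicOnNhd u (openAnnulus r R))
    (hcont : ContinuousOn u (closedAnnulus r R)) :
    HarmonicContOnCl (u ∘ logPolar) (re ⁻¹' Ioo (Real.log r) (Real.log R)) where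
  harmonicOnNhd z hz := harmonicAt_comp_analyticAt
    (harmonicAt_comp_linearIsometryEquiv planeIso
      (hu _ ((logPolar_mem_openAnnulus_iff hr (hr.trans hrR)).2 hz))) analyticAt_cexp
  continuousOn := by
    rw [closure_preimage_re, closure_Ioo (Real.log_lt_log hr hrR).ne]
    exact hcont.comp continuous_logPolar.continuousOn fun z hz =>
      (logPolar_mem_closedAnnulus_iff hr (hr.trans hrR)).2 hz

end LogPolar

section HausdorffMeasure

theorem edist_le_hausdorffMeasure_of_isPreconnected {X : Type*} [MetricSpace X]
    [MeasurableSpace X] [BorelSpace X] {s : Set X} (hs : IsPreconnected s) {x y : X} (hx : x ∈ s)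
    (hy : y ∈ s) : edist x y ≤ μH[1] s := by
  have hsub : Icc (dist x x) (dist y x) ⊆ (dist · x) '' s :=
    hs.intermediate_value (f := (dist · x)) hx hy (by fun_prop)
  calc edist x y = μH[1] (Icc (dist x x) (dist y x)) := by
        rw [hausdorffMeasure_real, Real.volume_Icc, dist_self, sub_zero, ← edist_dist, edist_comm]
    _ ≤ μH[1] ((dist · x) '' s) := measure_mono hsub
    _ ≤ μH[1] s := by
        simpa using (LipschitzWith.dist_left x).hausdorffMeasure_image_le zero_le_one s

theorem hausdorffMeasure_one_sphere_pos {E : Type*} [NormedAddCommGroup E] [NormedSpace ℝ E]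
    [MeasurableSpace E] [BorelSpace E] (hE : 1 < Module.rank ℝ E) (x : E) {r : ℝ} (hr : 0 < r) :
    0 < μH[1] (sphere x r) := by
  have : Nontrivial E := (rank_pos_iff_nontrivial (R := ℝ)).1 (zero_lt_one.trans hE)
  obtain ⟨y, hy⟩ := exists_norm_eq E hr.le
  have hadd : x + y ∈ sphere x r := by simpa using hy
  have hsub : x - y ∈ sphere x r := by simpa using hy
  have hdist : dist (x + y) (x - y) = 2 * r := by
    rw [dist_eq_norm, add_sub_sub_cancel, ← two_smul ℝ y, norm_smul, hy,
      Real.norm_two]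
  have hne : x + y ≠ x - y := dist_pos.1 (hdist ▸ by positivity)
  exact (edist_pos.2 hne).trans_le
    (edist_le_hausdorffMeasure_of_isPreconnected (isPreconnected_sphere hE x r) hadd hsub)

theorem hausdorffMeasure_one_sphere_lt_top {r : ℝ} (hr : 0 ≤ r) :
    μH[1] (sphere (0 : EuclideanSpace ℝ (Fin 2)) r) < ⊤ := by
  have himage : sphere (0 : EuclideanSpace ℝ (Fin 2)) r =
      (planeIso ∘ circleMap 0 r) '' Ioc 0 (2 * π) := by
    rw [image_comp, image_circleMap_Ioc, abs_of_nonneg hr, LinearIsometryEquiv.image_sphere,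
      map_zero]
  rw [himage]
  refine ((planeIso.lipschitz.comp (lipschitzWith_circleMap 0 r)).hausdorffMeasure_image_le
    zero_le_one _).trans_lt ?_
  rw [hausdorffMeasure_real, Real.volume_Ioc, ENNReal.rpow_one]
  exact ENNReal.mul_lt_top ENNReal.coe_lt_top ENNReal.ofReal_lt_top

theorem exists_nonneg_of_setIntegral_sphere_eq_zero {r : ℝ} (hr : 0 < r)
    {g : EuclideanSpace ℝ (Fin 2) → ℝ} (hg : ContinuousOn g (sphere 0 r))
    (hint : ∫ x in sphere 0 r, g x ∂μH[1] = 0) : ∃ x ∈ sphere 0 r, 0 ≤ g x := by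
  have hrank : 1 < Module.rank ℝ (EuclideanSpace ℝ (Fin 2)) := by
    rw [← Module.finrank_eq_rank]
    simp
  have hfin := (hausdorffMeasure_one_sphere_lt_top hr.le).ne
  obtain ⟨x, hx, hgx⟩ := exists_setAverage_le (hausdorffMeasure_one_sphere_pos hrank 0 hr).ne' hfin
    (hg.integrableOn_of_subset_isCompact (isCompact_sphere 0 r) isClosed_sphere.measurableSet
      Subset.rfl hfin)
  rw [setAverage_eq, hint, smul_zero] at hgx
  exact ⟨x, hx, hgx⟩

end HausdorffMeasure

section PerfectConductivity

/-- `u` solves the perfect conductivity problem on the annulus `r < ‖x‖ < R` with boundary data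
`f`, given as a function of the polar angle on the outer circle; `c` is the constant value of `u`
on the inner circle. -/
structure IsPerfectConductivitySol (r R : ℝ) (f : ℝ → ℝ) (c : ℝ)
    (u : EuclideanSpace ℝ (Fin 2) → ℝ) : Prop where
  harmonicOnNhd : HarmonicOnNhd u (openAnnulus r R)
  contDiffOn : ContDiffOn ℝ 1 u (closedAnnulus r R)
  inner : ∀ x, ‖x‖ = r → u x = c
  flux : ∫ x in sphere 0 r, fderivWithin ℝ u (closedAnnulus r R) x (‖x‖⁻¹ • x) ∂μH[1] = 0
  outer : ∀ θ, u (R • dir θ) = f θ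

namespace IsPerfectConductivitySol

variable {r R c : ℝ} {f : ℝ → ℝ} {u : EuclideanSpace ℝ (Fin 2) → ℝ}

theorem neg (h : IsPerfectConductivitySol r R f c u) (hr : 0 < r) (hrR : r < R) :
    IsPerfectConductivitySol r R (-f) (-c) (-u) where
  harmonicOnNhd := h.harmonicOnNhd.neg
  contDiffOn := h.contDiffOn.neg
  inner x hx := congrArg Neg.neg (h.inner x hx)
  flux := by
    have hcongr : EqOn (fun x => fderivWithin ℝ (-u) (closedAnnulus r R) x (‖x‖⁻¹ • x))
        (fun x => -fderivWithin ℝ u (closedAnnulus r R) x (‖x‖⁻¹ • x)) (sphere 0 r) :=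
      fun x hx => by
        have hxr : ‖x‖ = r := by simpa using hx
        have hdiff := uniqueDiffOn_closedAnnulus hr hrR x ⟨hxr.ge, hxr.trans_le hrR.le⟩
        simp only [fderivWithin_neg hdiff, neg_apply]
    rw [setIntegral_congr_fun isClosed_sphere.measurableSet hcongr, integral_neg, h.flux, neg_zero]
  outer θ := congrArg Neg.neg (h.outer θ)

theorem comp_logPolar_harmonicContOnCl (h : IsPerfectConductivitySol r R f c u) (hr : 0 < r)
    (hrR : r < R) :
    HarmonicContOnCl (u ∘ logPolar) (re ⁻¹' Ioo (Real.log r) (Real.log R)) :=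
  harmonicContOnCl_comp_logPolar hr hrR h.harmonicOnNhd h.contDiffOn.continuousOn

theorem comp_logPolar_inner (h : IsPerfectConductivitySol r R f c u) (hr : 0 < r) {z : ℂ}
    (hz : z.re = Real.log r) : (u ∘ logPolar) z = c :=
  h.inner _ (by rw [norm_logPolar, hz, Real.exp_log hr])

theorem comp_logPolar_outer (h : IsPerfectConductivitySol r R f c u) (hR : 0 < R) {z : ℂ}
    (hz : z.re = Real.log R) : (u ∘ logPolar) z = f z.im := by
  rw [comp_apply, logPolar_eq_smul_dir, hz, Real.exp_log hR, h.outer]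

theorem le_log_barrier (h : IsPerfectConductivitySol r R f c u) (hr : 0 < r) (hrR : r < R) {M : ℝ}
    (hM : ∀ θ, f θ ≤ M) {x : EuclideanSpace ℝ (Fin 2)} (hx : x ∈ closedAnnulus r R) :
    u x ≤ c + (M - c) / (Real.log R - Real.log r) * (Real.log ‖x‖ - Real.log r) := by
  have hR : 0 < R := hr.trans hrR
  obtain ⟨z, rfl⟩ := exists_logPolar_eq (norm_pos_iff.1 (hr.trans_le hx.1))
  rw [norm_logPolar, Real.log_exp]
  exact le_affine_of_periodic_of_boundary_le (Real.log_lt_log hr hrR) Real.two_pi_pos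
    (h.comp_logPolar_harmonicContOnCl hr hrR) (logPolar_periodic.comp u)
    (fun w hw => (h.comp_logPolar_inner hr hw).le)
    (fun w hw => (h.comp_logPolar_outer hR hw).trans_le (hM _))
    ((logPolar_mem_closedAnnulus_iff hr hR).1 hx)

theorem fderivWithin_apply_self_le (h : IsPerfectConductivitySol r R f c u) (hr : 0 < r)
    (hrR : r < R) {M : ℝ} (hM : ∀ θ, f θ ≤ M) {x : EuclideanSpace ℝ (Fin 2)} (hx : ‖x‖ = r) :
    fderivWithin ℝ u (closedAnnulus r R) x x ≤ (M - c) / (Real.log R - Real.log r) := by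
  set k := (M - c) / (Real.log R - Real.log r)
  have hρ : 1 < R / r := (one_lt_div hr).2 hrR
  have hmaps : MapsTo (fun t : ℝ => t • x) (Icc 1 (R / r)) (closedAnnulus r R) := fun t ht => by
    rw [mem_ofPred_eq, norm_smul, hx, Real.norm_of_nonneg (zero_le_one.trans ht.1)]
    exact ⟨le_mul_of_one_le_left hr.le ht.1, (le_div_iff₀ hr).1 ht.2⟩
  have hmax : IsMaxOn (fun t : ℝ => u (t • x) - k * Real.log t) (Icc 1 (R / r)) 1 := fun t ht => by
    have ht₀ : 0 < t := zero_lt_one.trans_le ht.1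
    have hbarrier := h.le_log_barrier hr hrR hM (hmaps ht)
    rw [norm_smul, hx, Real.norm_of_nonneg ht₀.le, Real.log_mul ht₀.ne' hr.ne',
      add_sub_cancel_right] at hbarrier
    simpa [h.inner x hx] using hbarrier
  have hderiv : HasDerivWithinAt (fun t : ℝ => u (t • x) - k * Real.log t)
      (fderivWithin ℝ u (closedAnnulus r R) x x - k) (Icc 1 (R / r)) 1 := by
    have hu : DifferentiableWithinAt ℝ u (closedAnnulus r R) x :=
      h.contDiffOn.differentiableOn one_ne_zero x ⟨hx.ge, hx.trans_le hrR.le⟩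
    simpa using! (hasDerivWithinAt_comp_ray hu hmaps).sub
      ((Real.hasDerivAt_log one_ne_zero).const_mul k).hasDerivWithinAt
  exact sub_nonpos.1 (hasDerivWithinAt_nonpos_of_isMaxOn_Icc_left hρ hmax hderiv)

theorem exists_fderivWithin_apply_self_nonneg (h : IsPerfectConductivitySol r R f c u)
    (hr : 0 < r) (hrR : r < R) : ∃ x : EuclideanSpace ℝ (Fin 2), ‖x‖ = r ∧
      0 ≤ fderivWithin ℝ u (closedAnnulus r R) x x := by
  have hsphere : sphere (0 : EuclideanSpace ℝ (Fin 2)) r ⊆ closedAnnulus r R := fun x hx => by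
    have hxr : ‖x‖ = r := by simpa using hx
    exact ⟨hxr.ge, hxr.trans_le hrR.le⟩
  have hcont : ContinuousOn
      (fun x => fderivWithin ℝ u (closedAnnulus r R) x (‖x‖⁻¹ • x)) (sphere 0 r) :=
    ((h.contDiffOn.continuousOn_fderivWithin (uniqueDiffOn_closedAnnulus hr hrR) le_rfl).mono
      hsphere).clm_apply ((continuousOn_id.norm.inv₀ fun x hx =>
        (hr.trans_le (hsphere hx).1).ne').smul continuousOn_id)
  obtain ⟨x, hx, hnonneg⟩ := exists_nonneg_of_setIntegral_sphere_eq_zero hr hcont h.flux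
  have hxr : ‖x‖ = r := by simpa using hx
  rw [map_smul, hxr, smul_eq_mul] at hnonneg
  exact ⟨x, hxr, (mul_nonneg_iff_of_pos_left (inv_pos.2 hr)).1 hnonneg⟩

theorem const_le (h : IsPerfectConductivitySol r R f c u) (hr : 0 < r) (hrR : r < R) {M : ℝ}
    (hM : ∀ θ, f θ ≤ M) : c ≤ M := by
  obtain ⟨x, hx, hnonneg⟩ := h.exists_fderivWithin_apply_self_nonneg hr hrR
  have hslope := hnonneg.trans (h.fderivWithin_apply_self_le hr hrR hM hx)
  simpa using (le_div_iff₀ (sub_pos.2 (Real.log_lt_log hr hrR))).1 hslope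

theorem abs_const_le (h : IsPerfectConductivitySol r R f c u) (hr : 0 < r) (hrR : r < R) {M : ℝ}
    (hM : ∀ θ, |f θ| ≤ M) : |c| ≤ M :=
  abs_le'.2 ⟨h.const_le hr hrR fun θ => (abs_le'.1 (hM θ)).1,
    (h.neg hr hrR).const_le hr hrR fun θ => (abs_le'.1 (hM θ)).2⟩

theorem norm_mul_norm_fderiv_le (h : IsPerfectConductivitySol r R f c u) (hr : 0 < r)
    (hrR : r < R) {A M K : ℝ} (hf : ContDiff ℝ 2 f) (hA : ∀ θ, |f θ - c| ≤ A)
    (hM : ∀ θ, |deriv f θ| ≤ M) (hK : ∀ θ, |deriv (deriv f) θ| ≤ K)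
    {x : EuclideanSpace ℝ (Fin 2)} (hx : x ∈ openAnnulus r R) : ‖x‖ * ‖fderiv ℝ u x‖ ≤
      A / (Real.log R - Real.log r) + K * (Real.log R - Real.log r) + M := by
  have hR : 0 < R := hr.trans hrR
  obtain ⟨z, rfl⟩ := exists_logPolar_eq (norm_pos_iff.1 (hr.trans hx.1))
  exact (norm_logPolar_mul_norm_fderiv_le
    ((h.harmonicOnNhd _ hx).1.differentiableAt two_ne_zero)).trans <|
    norm_fderiv_le_of_boundary Real.two_pi_pos (h.comp_logPolar_harmonicContOnCl hr hrR)
      (logPolar_periodic.comp u) (fun _ => h.comp_logPolar_inner hr)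
      (fun _ => h.comp_logPolar_outer hR) hf hA hM hK ((logPolar_mem_openAnnulus_iff hr hR).1 hx)

theorem norm_fderiv_le (h : IsPerfectConductivitySol r R f c u) (hr : 0 < r) (hrR : r < R)
    (hR : R ≤ 2 * r) {M : ℝ} (hf : ContDiff ℝ 2 f) (hM₀ : ∀ θ, |f θ| ≤ M)
    (hM₁ : ∀ θ, |deriv f θ| ≤ M) (hM₂ : ∀ θ, |deriv (deriv f) θ| ≤ M)
    {x : EuclideanSpace ℝ (Fin 2)} (hx : x ∈ openAnnulus r R) :
    ‖fderiv ℝ u x‖ ≤ 8 * M / (R - r) := by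
  have hM : 0 ≤ M := (abs_nonneg _).trans (hM₀ 0)
  have hA : ∀ θ, |f θ - c| ≤ 2 * M := fun θ => by
    linarith [abs_sub (f θ) c, hM₀ θ, h.abs_const_le hr hrR hM₀]
  have hδ : 0 < R - r := sub_pos.2 hrR
  set L := Real.log R - Real.log r
  have hlower : (R - r) / (2 * r) ≤ L :=
    (div_le_div_of_nonneg_left hδ.le (hr.trans hrR) hR).trans
      (div_le_log_sub_log hr (hr.trans hrR))
  have hupper : L ≤ 1 :=
    (log_sub_log_le_div hr (hr.trans hrR)).trans ((div_le_one hr).2 (by linarith))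
  have hLpos : 0 < L := (by positivity : 0 < (R - r) / (2 * r)).trans_le hlower
  refine le_of_mul_le_mul_left ?_ hr
  calc r * ‖fderiv ℝ u x‖ ≤ ‖x‖ * ‖fderiv ℝ u x‖ := by gcongr; exact hx.1.le
    _ ≤ 2 * M / L + M * L + M := h.norm_mul_norm_fderiv_le hr hrR hf hA hM₁ hM₂ hx
    _ ≤ 2 * M / L + M / L + M / L := by
      gcongr
      · exact (mul_le_of_le_one_right hM hupper).trans (le_div_self hM hLpos hupper)
      · exact le_div_self hM hLpos hupper
    _ = 4 * M / L := by ring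
    _ ≤ 4 * M / ((R - r) / (2 * r)) := by gcongr
    _ = r * (8 * M / (R - r)) := by field_simp; ring

theorem exists_le_norm_fderiv (h : IsPerfectConductivitySol r R f c u) (hr : 0 ≤ r) (hrR : r < R)
    (θ : ℝ) : ∃ x ∈ openAnnulus r R, |f θ - c| / (R - r) ≤ ‖fderiv ℝ u x‖ := by
  have hnorm : ∀ t, r ≤ t → ‖t • dir θ‖ = t := fun t ht => by
    rw [norm_smul, norm_dir, mul_one, Real.norm_of_nonneg (hr.trans ht)]
  have hopen : ∀ t ∈ Ioo r R, t • dir θ ∈ openAnnulus r R := fun t ht => by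
    rwa [mem_ofPred_eq, hnorm t ht.1.le]
  have hcont : ContinuousOn (fun t : ℝ => u (t • dir θ)) (Icc r R) :=
    h.contDiffOn.continuousOn.comp (by fun_prop) fun t ht => by rwa [mem_ofPred_eq, hnorm t ht.1]
  have hderiv : ∀ t ∈ Ioo r R, HasDerivAt (fun t : ℝ => u (t • dir θ))
      (fderiv ℝ u (t • dir θ) (dir θ)) t := fun t ht => by
    have hray : HasDerivAt (fun t : ℝ => t • dir θ) (dir θ) t := by
      simpa using (hasDerivAt_id t).smul_const (dir θ)
    exact ((h.harmonicOnNhd _ (hopen t ht)).1.differentiableAt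
      two_ne_zero).hasFDerivAt.comp_hasDerivAt t hray
  obtain ⟨t, ht, hslope⟩ := exists_hasDerivAt_eq_slope _ _ hrR hcont hderiv
  refine ⟨t • dir θ, hopen t ht, ?_⟩
  rw [h.outer, h.inner _ (hnorm r le_rfl)] at hslope
  calc |f θ - c| / (R - r) = ‖fderiv ℝ u (t • dir θ) (dir θ)‖ := by
        rw [hslope, Real.norm_eq_abs, abs_div, abs_of_pos (sub_pos.2 hrR)]
    _ ≤ ‖fderiv ℝ u (t • dir θ)‖ := by
        simpa [norm_dir] using (fderiv ℝ u (t • dir θ)).le_opNorm (dir θ)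

end IsPerfectConductivitySol

end PerfectConductivity

theorem perfect_two_dim_gradient_blowup {r₀ : ℝ} (hr₀ : 0 < r₀)
    (φ : EuclideanSpace ℝ (Fin 2) → ℝ)
    (hφ : ContDiff ℝ 2 fun θ : ℝ => φ (dir θ))
    (hφnc : ∃ θ₁ θ₂ : ℝ, φ (dir θ₁) ≠ φ (dir θ₂)) :
    ∃ ε₀ : ℝ, 0 < ε₀ ∧ ∃ c₁ c₂ : ℝ, 0 < c₁ ∧ c₁ ≤ c₂ ∧
      ∀ ε ∈ Set.Ioo (0 : ℝ) ε₀, ∀ u : EuclideanSpace ℝ (Fin 2) → ℝ,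
        HarmonicOnSet u {x | r₀ < ‖x‖ ∧ ‖x‖ < r₀ + ε} →
        ContDiffOn ℝ 1 u {x | r₀ ≤ ‖x‖ ∧ ‖x‖ ≤ r₀ + ε} →
        (∃ c : ℝ, ∀ x : EuclideanSpace ℝ (Fin 2), ‖x‖ = r₀ → u x = c) →
        (∫ x in Metric.sphere (0 : EuclideanSpace ℝ (Fin 2)) r₀,
          fderivWithin ℝ u {y | r₀ ≤ ‖y‖ ∧ ‖y‖ ≤ r₀ + ε} x (‖x‖⁻¹ • x) ∂μH[(1 : ℝ)]) = 0 →
        (∀ θ : ℝ, u ((r₀ + ε) • dir θ) = φ (dir θ)) →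
        c₁ / ε ≤ sSup ((fun x => ‖gradient u x‖) '' {x | r₀ < ‖x‖ ∧ ‖x‖ < r₀ + ε}) ∧
        sSup ((fun x => ‖gradient u x‖) '' {x | r₀ < ‖x‖ ∧ ‖x‖ < r₀ + ε}) ≤ c₂ / ε := by
  obtain ⟨θ₁, θ₂, hne⟩ := hφnc
  obtain ⟨M, hM₀, hM₁, hM₂⟩ :=
    exists_abs_le_deriv_deriv_of_periodic Real.two_pi_pos.ne' (dir_periodic.comp φ) hφ
  set c₁ := |φ (dir θ₁) - φ (dir θ₂)| / 2
  refine ⟨r₀, hr₀, c₁, max c₁ (8 * M), half_pos (abs_sub_pos.2 hne), le_max_left _ _, ?_⟩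
  rintro ε ⟨hε, hεr⟩ u hharm hC1 ⟨c, hinner⟩ hflux houter
  have hsol : IsPerfectConductivitySol r₀ (r₀ + ε) (fun θ => φ (dir θ)) c u :=
    ⟨hharm.harmonicOnNhd isOpen_openAnnulus, hC1, hinner, hflux, houter⟩
  have hrR : r₀ < r₀ + ε := lt_add_of_pos_right r₀ hε
  obtain ⟨θ, hθ⟩ : ∃ θ, c₁ ≤ |φ (dir θ) - c| :=
    (half_abs_sub_le_abs_sub_or _ _ c).elim (⟨θ₁, ·⟩) (⟨θ₂, ·⟩)
  obtain ⟨x, hx, hlower⟩ := hsol.exists_le_norm_fderiv hr₀.le hrR θ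
  have hupper : ∀ y ∈ openAnnulus r₀ (r₀ + ε), ‖gradient u y‖ ≤ max c₁ (8 * M) / ε := fun y hy => by
    have hle := hsol.norm_fderiv_le hr₀ hrR (by linarith) hφ hM₀ hM₁ hM₂ hy
    rw [add_sub_cancel_left, ← norm_gradient] at hle
    exact hle.trans (by gcongr; exact le_max_right _ _)
  rw [add_sub_cancel_left, ← norm_gradient] at hlower
  exact ⟨(by gcongr : c₁ / ε ≤ _).trans <| hlower.trans <|
      le_csSup ⟨_, forall_mem_image.2 hupper⟩ (mem_image_of_mem _ hx),
    csSup_le ⟨_, mem_image_of_mem _ hx⟩ (forall_mem_image.2 hupper)⟩
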